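/- Let p > 1 and a, b, L > 0. Then Σ^{a,b}_p(0,L) = ((a+b)/2)^p · Σ_p(0,L), where Σ_p(0,L) := Σ^{1,1}_p(0,L) is the Fučík spectrum of the classical one-dimensional p-Laplacian: that is, (μ, ν) ∈ Σ^{a,b}_p(0,L) if and only if ( (2/(a+b))^p μ, (2/(a+b))^p ν ) ∈ Σ^{1,1}_p(0,L). -/

import Mathlib

open Set

/-- `u` is C¹ on `[α, γ]` with derivative `u'` there. -/
def C1On (α γ : ℝ) (u u' : ℝ → ℝ) : Prop :=
  (∀ t ∈ Set.Icc α γ, HasDerivWithinAt u (u' t) (Set.Icc α γ) t) ∧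
  ContinuousOn u' (Set.Icc α γ)

/-- Admissible functions on `[0, L]`: C¹ with zero boundary values. -/
def Adm (L : ℝ) (u u' : ℝ → ℝ) : Prop :=
  C1On 0 L u u' ∧ u 0 = 0 ∧ u L = 0

/-- The asymmetric energy integrand `a^p (s⁺)^p + b^p (s⁻)^p`. -/
noncomputable def asymE (p a b s : ℝ) : ℝ :=
  a ^ p * (max s 0) ^ p + b ^ p * (max (-s) 0) ^ p

/-- The asymmetric flux `a^p (s⁺)^(p-1) - b^p (s⁻)^(p-1)`. -/
noncomputable def asymFlux (p a b s : ℝ) : ℝ :=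
  a ^ p * (max s 0) ^ (p - 1) - b ^ p * (max (-s) 0) ^ (p - 1)

/-- The first Dirichlet eigenvalue `λ^{a,b}_{1,p}(0,L)`, as the infimum of the
asymmetric energy over normalized admissible functions. -/
noncomputable def lam1 (p a b L : ℝ) : ℝ :=
  sInf { E : ℝ | ∃ u u' : ℝ → ℝ, Adm L u u' ∧
    (∫ t in (0:ℝ)..L, |u t| ^ p) = 1 ∧
    E = ∫ t in (0:ℝ)..L, asymE p a b (u' t) }

/-- `u` (a C¹ function on `[0,L]` with derivative `u'` and zero boundary values)
is a weak solution of `-Δ^{a,b}_p u = g` on `(0,L)`. -/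
def IsWeakSol (p a b L : ℝ) (u u' g : ℝ → ℝ) : Prop :=
  Adm L u u' ∧
  ∀ φ φ' : ℝ → ℝ, Adm L φ φ' →
    (∫ t in (0:ℝ)..L, asymFlux p a b (u' t) * φ' t) =
      ∫ t in (0:ℝ)..L, g t * φ t

/-- `(μ, ν)` belongs to the Fučík spectrum `Σ^{a,b}_p(0,L)`. -/
def FucikMem (p a b L μ ν : ℝ) : Prop :=
  ∃ u u' : ℝ → ℝ, IsWeakSol p a b L u u'
      (fun t => μ * (max (u t) 0) ^ (p - 1) - ν * (max (-u t) 0) ^ (p - 1)) ∧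
    ∃ t ∈ Set.Icc (0:ℝ) L, u t ≠ 0


lemma posPow_hasDerivAt {q : ℝ} (hq : 1 < q) (x : ℝ) :
    HasDerivAt (fun y : ℝ => (max y 0) ^ q) (q * (max x 0) ^ (q - 1)) x := by
  rcases lt_trichotomy x 0 with h | h | h
  · have h1 : (fun y : ℝ => (max y 0) ^ q) =ᶠ[nhds x] fun _ => (0:ℝ) := by
      filter_upwards [gt_mem_nhds h] with y hy
      rw [max_eq_right hy.le, Real.zero_rpow (by linarith)]
    rw [max_eq_right h.le, Real.zero_rpow (by linarith), mul_zero]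
    exact (hasDerivAt_const x (0:ℝ)).congr_of_eventuallyEq h1
  · subst h
    rw [max_self, Real.zero_rpow (by linarith : q - 1 ≠ 0), mul_zero]
    have hR : HasDerivWithinAt (fun y : ℝ => (max y 0) ^ q) 0 (Set.Ici 0) 0 := by
      have h0 := (Real.hasDerivAt_rpow_const (x := 0) (p := q) (Or.inr hq.le)).hasDerivWithinAt
        (s := Set.Ici 0)
      rw [Real.zero_rpow (by linarith : q - 1 ≠ 0), mul_zero] at h0
      refine h0.congr (fun y hy => ?_) (by simp)
      rw [max_eq_left hy]
    have hLft : HasDerivWithinAt (fun y : ℝ => (max y 0) ^ q) 0 (Set.Iic 0) 0 := by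
      refine (hasDerivWithinAt_const (0:ℝ) (Set.Iic 0) (0:ℝ)).congr (fun y hy => ?_) ?_
      · rw [max_eq_right hy, Real.zero_rpow (by linarith)]
      · rw [max_self, Real.zero_rpow (by linarith)]
    have := hLft.union hR
    rwa [Set.Iic_union_Ici, hasDerivWithinAt_univ] at this
  · have h1 : (fun y : ℝ => (max y 0) ^ q) =ᶠ[nhds x] fun y => y ^ q := by
      filter_upwards [lt_mem_nhds h] with y hy
      rw [max_eq_left hy.le]
    rw [max_eq_left h.le]
    exact (Real.hasDerivAt_rpow_const (Or.inl h.ne')).congr_of_eventuallyEq h1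

lemma negPow_hasDerivAt {q : ℝ} (hq : 1 < q) (x : ℝ) :
    HasDerivAt (fun y : ℝ => (max (-y) 0) ^ q) (-(q * (max (-x) 0) ^ (q - 1))) x := by
  have := (posPow_hasDerivAt hq (-x)).comp x (hasDerivAt_neg x)
  simpa [Function.comp_def] using this

lemma posPow_continuous {q : ℝ} (hq : 0 < q) : Continuous (fun y : ℝ => (max y 0) ^ q) :=
  (continuous_id.max continuous_const).rpow_const (fun _ => Or.inr hq.le)

lemma negPow_continuous {q : ℝ} (hq : 0 < q) : Continuous (fun y : ℝ => (max (-y) 0) ^ q) :=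
  (posPow_continuous hq).comp continuous_neg

lemma asymFlux_continuous {p : ℝ} (hp : 1 < p) (a b : ℝ) : Continuous (asymFlux p a b) := by
  unfold asymFlux
  exact (continuous_const.mul (posPow_continuous (by linarith))).sub
    (continuous_const.mul (negPow_continuous (by linarith)))

/-- The right-hand side nonlinearity. -/
noncomputable def gg (p μ ν x : ℝ) : ℝ :=
  μ * (max x 0) ^ (p - 1) - ν * (max (-x) 0) ^ (p - 1)

lemma gg_continuous {p : ℝ} (hp : 1 < p) (μ ν : ℝ) : Continuous (gg p μ ν) := by
  unfold gg
  exact (continuous_const.mul (posPow_continuous (by linarith))).sub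
    (continuous_const.mul (negPow_continuous (by linarith)))

lemma flux_pos {p a b y : ℝ} (hp : 1 < p) (hy : 0 < y) :
    asymFlux p a b y = a ^ p * y ^ (p - 1) := by
  unfold asymFlux
  rw [max_eq_left hy.le, max_eq_right (by linarith : -y ≤ 0), Real.zero_rpow (by linarith)]
  ring

lemma flux_neg {p a b y : ℝ} (hp : 1 < p) (hy : y < 0) :
    asymFlux p a b y = -(b ^ p * (-y) ^ (p - 1)) := by
  unfold asymFlux
  rw [max_eq_right hy.le, max_eq_left (by linarith : 0 ≤ -y), Real.zero_rpow (by linarith)]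
  ring

lemma flux_zero {p a b : ℝ} (hp : 1 < p) : asymFlux p a b 0 = 0 := by
  unfold asymFlux
  simp [Real.zero_rpow (by linarith : p - 1 ≠ 0)]

lemma E_pos {p a b y : ℝ} (hp : 1 < p) (hy : 0 < y) :
    asymE p a b y = a ^ p * y ^ p := by
  unfold asymE
  rw [max_eq_left hy.le, max_eq_right (by linarith : -y ≤ 0), Real.zero_rpow (by linarith)]
  ring

lemma E_neg {p a b y : ℝ} (hp : 1 < p) (hy : y < 0) :
    asymE p a b y = b ^ p * (-y) ^ p := by
  unfold asymE
  rw [max_eq_right hy.le, max_eq_left (by linarith : 0 ≤ -y), Real.zero_rpow (by linarith)]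
  ring

lemma E_zero {p a b : ℝ} (hp : 1 < p) : asymE p a b 0 = 0 := by
  unfold asymE
  simp [Real.zero_rpow (by linarith : p ≠ 0)]

lemma asymE_nonneg {p a b : ℝ} (ha : 0 < a) (hb : 0 < b) (y : ℝ) :
    0 ≤ asymE p a b y := by
  unfold asymE
  positivity

/-- Strong form of the Fucik problem, for functions extended to the whole line. -/
structure Strong (p a b L μ ν : ℝ) (u u' : ℝ → ℝ) : Prop where
  cu : Continuous u
  cu' : Continuous u'
  du : ∀ t ∈ Set.Ioo 0 L, HasDerivAt u (u' t) t
  dw : ∀ t ∈ Set.Ioo 0 L, HasDerivAt (fun x => asymFlux p a b (u' x)) (-(gg p μ ν (u t))) t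
  z0 : ∀ t ≤ 0, u t = 0
  zL : ∀ t, L ≤ t → u t = 0
  nz : ∃ t ∈ Set.Icc 0 L, u t ≠ 0

lemma duBois {L : ℝ} (hL : 0 < L) {w g : ℝ → ℝ} (hw : Continuous w) (hg : Continuous g)
    (h : ∀ φ φ' : ℝ → ℝ, Adm L φ φ' →
      (∫ t in (0:ℝ)..L, w t * φ' t) = ∫ t in (0:ℝ)..L, g t * φ t) :
    ∀ t ∈ Set.Ioo 0 L, HasDerivAt w (-(g t)) t := by
  set G : ℝ → ℝ := fun t => ∫ x in (0:ℝ)..t, g x with hG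
  have dG : ∀ t, HasDerivAt G (g t) t := fun t =>
    intervalIntegral.integral_hasDerivAt_right (hg.intervalIntegrable _ _)
      (hg.stronglyMeasurableAtFilter _ _) hg.continuousAt
  have cG : Continuous G := continuous_iff_continuousAt.2 fun t => (dG t).continuousAt
  set m : ℝ := (∫ x in (0:ℝ)..L, (w x + G x)) / L with hm
  set φ' : ℝ → ℝ := fun t => w t + G t - m with hφ'
  have cφ' : Continuous φ' := (hw.add cG).sub continuous_const
  set φ : ℝ → ℝ := fun t => ∫ x in (0:ℝ)..t, φ' x with hφ
  have dφ : ∀ t, HasDerivAt φ (φ' t) t := fun t =>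
    intervalIntegral.integral_hasDerivAt_right (cφ'.intervalIntegrable _ _)
      (cφ'.stronglyMeasurableAtFilter _ _) cφ'.continuousAt
  have cφ : Continuous φ := continuous_iff_continuousAt.2 fun t => (dφ t).continuousAt
  have iwG : IntervalIntegrable (fun t => w t + G t) MeasureTheory.volume 0 L :=
    (hw.add cG).intervalIntegrable _ _
  have iw : IntervalIntegrable (fun t => w t * φ' t) MeasureTheory.volume 0 L :=
    (hw.mul cφ').intervalIntegrable _ _
  have iG : IntervalIntegrable (fun t => G t * φ' t) MeasureTheory.volume 0 L :=
    (cG.mul cφ').intervalIntegrable _ _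
  have ig : IntervalIntegrable (fun t => g t * φ t) MeasureTheory.volume 0 L :=
    (hg.mul cφ).intervalIntegrable _ _
  have im : IntervalIntegrable (fun t => m * φ' t) MeasureTheory.volume 0 L :=
    (continuous_const.mul cφ').intervalIntegrable _ _
  have φ0 : φ 0 = 0 := by simp [hφ]
  have φL : φ L = 0 := by
    simp only [hφ, hφ']
    rw [intervalIntegral.integral_sub iwG (continuous_const.intervalIntegrable _ _)]
    simp only [intervalIntegral.integral_const, hm, smul_eq_mul, sub_zero]
    field_simp
    simp
  have adm : Adm L φ φ' := ⟨⟨fun t _ => (dφ t).hasDerivWithinAt, cφ'.continuousOn⟩, φ0, φL⟩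
  have h1 := h φ φ' adm
  have h2 : (∫ t in (0:ℝ)..L, (G t * φ' t + g t * φ t)) = 0 := by
    have := intervalIntegral.integral_eq_sub_of_hasDerivAt (a := 0) (b := L)
      (f := fun t => G t * φ t) (f' := fun t => g t * φ t + G t * φ' t)
      (fun t _ => (dG t).mul (dφ t))
      (((hg.mul cφ).add (cG.mul cφ')).intervalIntegrable _ _)
    simp only [φ0, φL, mul_zero, sub_zero] at this
    rw [← this]
    congr 1; ext t; ring
  rw [intervalIntegral.integral_add iG ig] at h2
  have h3 : (∫ t in (0:ℝ)..L, φ' t * φ' t) = 0 := by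
    have e : (fun t => φ' t * φ' t) = fun t => (w t * φ' t + G t * φ' t) - m * φ' t := by
      ext t; simp only [hφ']; ring
    rw [e, intervalIntegral.integral_sub (iw.add iG) im,
      intervalIntegral.integral_add iw iG, intervalIntegral.integral_const_mul]
    have : (∫ t in (0:ℝ)..L, φ' t) = 0 := φL
    rw [this, h1]; linarith
  have h4 : ∀ t ∈ Set.Icc 0 L, φ' t = 0 := by
    by_contra hcon
    push Not at hcon
    obtain ⟨t, ht, hne⟩ := hcon
    have := intervalIntegral.integral_pos (f := fun t => φ' t * φ' t) hL
      (cφ'.mul cφ').continuousOn (fun x _ => mul_self_nonneg _)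
      ⟨t, ht, mul_self_pos.2 hne⟩
    linarith
  intro t ht
  have h5 : w =ᶠ[nhds t] fun x => m - G x := by
    filter_upwards [Ioo_mem_nhds ht.1 ht.2] with x hx
    have := h4 x ⟨hx.1.le, hx.2.le⟩
    simp only [hφ'] at this
    linarith
  exact ((dG t).const_sub m).congr_of_eventuallyEq h5

lemma strong_of_mem {p a b L μ ν : ℝ} (hp : 1 < p) (hL : 0 < L)
    (h : FucikMem p a b L μ ν) : ∃ u u', Strong p a b L μ ν u u' := by
  obtain ⟨u, u', ⟨⟨⟨hd, hc⟩, h0, hL0⟩, hw⟩, hnz⟩ := h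
  set κ : ℝ → ℝ := fun t => max 0 (min L t) with hκ
  have cκ : Continuous κ := continuous_const.max (continuous_const.min continuous_id)
  have mκ : ∀ t, κ t ∈ Set.Icc 0 L := fun t =>
    ⟨le_max_left _ _, max_le hL.le (min_le_left _ _)⟩
  have iκ : ∀ t ∈ Set.Icc 0 L, κ t = t := fun t ht => by
    simp only [hκ]; rw [min_eq_right ht.2, max_eq_right ht.1]
  have cu : Continuous (fun t => u (κ t)) :=
    ContinuousOn.comp_continuous (fun t ht => (hd t ht).continuousWithinAt) cκ mκ
  have cu' : Continuous (fun t => u' (κ t)) := hc.comp_continuous cκ mκ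
  refine ⟨fun t => u (κ t), fun t => u' (κ t), cu, cu', ?_, ?_, ?_, ?_, ?_⟩
  · intro t ht
    have h1 := (hd t ⟨ht.1.le, ht.2.le⟩).hasDerivAt (Icc_mem_nhds ht.1 ht.2)
    have h2 : (fun t => u (κ t)) =ᶠ[nhds t] u := by
      filter_upwards [Icc_mem_nhds ht.1 ht.2] with x hx
      rw [iκ x hx]
    rw [iκ t ⟨ht.1.le, ht.2.le⟩]
    exact h1.congr_of_eventuallyEq h2
  · refine duBois hL (g := fun t => gg p μ ν (u (κ t))) ((asymFlux_continuous hp a b).comp cu')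
      ((gg_continuous hp μ ν).comp cu) ?_
    intro φ φ' hφ
    have := hw φ φ' hφ
    have e1 : (∫ t in (0:ℝ)..L, asymFlux p a b (u' (κ t)) * φ' t)
        = ∫ t in (0:ℝ)..L, asymFlux p a b (u' t) * φ' t := by
      apply intervalIntegral.integral_congr
      intro t ht
      rw [Set.uIcc_of_le hL.le] at ht
      simp only [iκ t ht]
    have e2 : (∫ t in (0:ℝ)..L, gg p μ ν (u (κ t)) * φ t)
        = ∫ t in (0:ℝ)..L, gg p μ ν (u t) * φ t := by
      apply intervalIntegral.integral_congr
      intro t ht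
      rw [Set.uIcc_of_le hL.le] at ht
      simp only [iκ t ht]
    change (∫ t in (0:ℝ)..L, asymFlux p a b (u' (κ t)) * φ' t) = _
    rw [e1, e2]
    exact this
  · intro t ht
    have : κ t = 0 := by simp only [hκ]; rw [min_eq_right (by linarith), max_eq_left ht]
    simp only [this, h0]
  · intro t ht
    have : κ t = L := by simp only [hκ]; rw [min_eq_left ht, max_eq_right hL.le]
    simp only [this, hL0]
  · obtain ⟨t, ht, hne⟩ := hnz
    exact ⟨t, ht, by simpa only [iκ t ht] using hne⟩

lemma mem_of_strong {p a b L μ ν : ℝ} (hp : 1 < p) (hL : 0 < L) {u u' : ℝ → ℝ} {Z : Set ℝ}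
    (hZ : Z.Countable) (cu : Continuous u) (cu' : Continuous u')
    (du : ∀ t ∈ Set.Ioo 0 L \ Z, HasDerivAt u (u' t) t)
    (dw : ∀ t ∈ Set.Ioo 0 L \ Z,
      HasDerivAt (fun x => asymFlux p a b (u' x)) (-(gg p μ ν (u t))) t)
    (z0 : u 0 = 0) (zL : u L = 0) (nz : ∃ t ∈ Set.Icc 0 L, u t ≠ 0) :
    FucikMem p a b L μ ν := by
  refine ⟨u, u', ⟨⟨⟨?_, cu'.continuousOn⟩, z0, zL⟩, ?_⟩, nz⟩
  · have key : ∀ t ∈ Set.Icc 0 L, u t = ∫ x in (0:ℝ)..t, u' x := by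
      intro t ht
      rw [MeasureTheory.integral_eq_of_hasDerivAt_off_countable_of_le u u' ht.1 hZ cu.continuousOn
        (fun x hx => du x ⟨⟨hx.1.1, hx.1.2.trans_le ht.2⟩, hx.2⟩)
        (cu'.intervalIntegrable _ _), z0, sub_zero]
    intro t ht
    have h1 : HasDerivAt (fun t => ∫ x in (0:ℝ)..t, u' x) (u' t) t :=
      intervalIntegral.integral_hasDerivAt_right (cu'.intervalIntegrable _ _)
        (cu'.stronglyMeasurableAtFilter _ _) cu'.continuousAt
    exact h1.hasDerivWithinAt.congr key (key t ht)
  · intro φ φ' ⟨⟨hφ, cφ'⟩, φ0, φL⟩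
    have cφ : ContinuousOn φ (Set.Icc 0 L) := fun t ht => (hφ t ht).continuousWithinAt
    have cw : Continuous (fun t => asymFlux p a b (u' t)) := (asymFlux_continuous hp a b).comp cu'
    have cg : Continuous (fun t => gg p μ ν (u t)) := (gg_continuous hp μ ν).comp cu
    have i1 : IntervalIntegrable (fun t => -(gg p μ ν (u t)) * φ t) MeasureTheory.volume 0 L := by
      apply ContinuousOn.intervalIntegrable
      rw [Set.uIcc_of_le hL.le]
      exact cg.neg.continuousOn.mul cφ
    have i2 : IntervalIntegrable (fun t => asymFlux p a b (u' t) * φ' t)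
        MeasureTheory.volume 0 L := by
      apply ContinuousOn.intervalIntegrable
      rw [Set.uIcc_of_le hL.le]
      exact cw.continuousOn.mul cφ'
    have := MeasureTheory.integral_eq_of_hasDerivAt_off_countable_of_le
      (fun t => asymFlux p a b (u' t) * φ t)
      (fun t => -(gg p μ ν (u t)) * φ t + asymFlux p a b (u' t) * φ' t) hL.le hZ
      (cw.continuousOn.mul cφ)
      (fun x hx => (dw x hx).mul ((hφ x ⟨hx.1.1.le, hx.1.2.le⟩).hasDerivAt
        (Icc_mem_nhds hx.1.1 hx.1.2))) (i1.add i2)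
    rw [intervalIntegral.integral_add i1 i2] at this
    simp only [φ0, φL, mul_zero, sub_zero, neg_mul, intervalIntegral.integral_neg] at this
    change _ = ∫ t in (0:ℝ)..L, gg p μ ν (u t) * φ t
    linarith

/-- `p` times the primitive of `gg`. -/
noncomputable def GG (p μ ν x : ℝ) : ℝ := μ * (max x 0) ^ p + ν * (max (-x) 0) ^ p

lemma GG_hasDerivAt {p : ℝ} (hp : 1 < p) (μ ν x : ℝ) :
    HasDerivAt (GG p μ ν) (p * gg p μ ν x) x := by
  have := ((posPow_hasDerivAt hp x).const_mul μ).add ((negPow_hasDerivAt hp x).const_mul ν)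
  refine this.congr_deriv ?_
  unfold gg; ring

lemma GG_continuous {p : ℝ} (hp : 1 < p) (μ ν : ℝ) : Continuous (GG p μ ν) :=
  continuous_iff_continuousAt.2 fun x => (GG_hasDerivAt hp μ ν x).continuousAt

lemma GG_eq {p : ℝ} (hp : 1 < p) (μ ν x : ℝ) : GG p μ ν x = x * gg p μ ν x := by
  have key : ∀ y : ℝ, (max y 0) ^ p = y * (max y 0) ^ (p - 1) := by
    intro y
    rcases le_or_gt y 0 with h | h
    · rw [max_eq_right h, Real.zero_rpow (by linarith), Real.zero_rpow (by linarith), mul_zero]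
    · rw [max_eq_left h.le]
      nth_rewrite 2 [← Real.rpow_one y]
      rw [← Real.rpow_add h]; congr 1; ring
  unfold GG gg
  rw [key x, key (-x)]; ring

lemma GG_zero {p : ℝ} (hp : 1 < p) (μ ν : ℝ) : GG p μ ν 0 = 0 := by
  rw [GG_eq hp, zero_mul]

lemma GG_neg (p μ ν x : ℝ) : GG p μ ν (-x) = GG p ν μ x := by
  unfold GG; rw [neg_neg]; ring

lemma GG_pos {p : ℝ} (hp : 1 < p) (μ ν : ℝ) {x : ℝ} (hx : 0 ≤ x) : GG p μ ν x = μ * x ^ p := by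
  unfold GG
  rw [max_eq_left hx, max_eq_right (by linarith), Real.zero_rpow (by linarith)]; ring

lemma scal1 {p α y : ℝ} (hp : 1 < p) (hα : 0 < α) (hy : 0 < y) :
    α ^ (-(1 / (p - 1))) * (α * y ^ (p - 1)) ^ (p / (p - 1)) = α * y ^ p := by
  have h1 : p - 1 ≠ 0 := by linarith
  rw [Real.mul_rpow hα.le (by positivity), ← Real.rpow_mul hy.le, ← mul_assoc,
    ← Real.rpow_add hα]
  have e1 : -(1 / (p - 1)) + p / (p - 1) = 1 := by field_simp; ring
  have e2 : (p - 1) * (p / (p - 1)) = p := by field_simp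
  rw [e1, e2, Real.rpow_one]

lemma scal2 {p α y : ℝ} (hp : 1 < p) (hα : 0 < α) (hy : 0 < y) :
    α ^ (-(1 / (p - 1))) * (α * y ^ (p - 1)) ^ (p / (p - 1) - 1) = y := by
  have h1 : p - 1 ≠ 0 := by linarith
  rw [Real.mul_rpow hα.le (by positivity), ← Real.rpow_mul hy.le, ← mul_assoc,
    ← Real.rpow_add hα]
  have e1 : -(1 / (p - 1)) + (p / (p - 1) - 1) = 0 := by field_simp; ring
  have e2 : (p - 1) * (p / (p - 1) - 1) = 1 := by field_simp; ring
  rw [e1, e2, Real.rpow_one, Real.rpow_zero, one_mul]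

/-- The dual energy as a function of the flux. -/
noncomputable def Psi (p a b w : ℝ) : ℝ :=
  (a ^ p) ^ (-(1 / (p - 1))) * (max w 0) ^ (p / (p - 1)) +
    (b ^ p) ^ (-(1 / (p - 1))) * (max (-w) 0) ^ (p / (p - 1))

lemma q_gt {p : ℝ} (hp : 1 < p) : 1 < p / (p - 1) := by
  rw [one_lt_div (by linarith)]; linarith

lemma Psi_flux {p a b : ℝ} (hp : 1 < p) (ha : 0 < a) (hb : 0 < b) (y : ℝ) :
    Psi p a b (asymFlux p a b y) = asymE p a b y := by
  have hq := q_gt hp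
  have hq0 : p / (p - 1) ≠ 0 := by linarith
  unfold Psi
  rcases lt_trichotomy y 0 with h | h | h
  · have hb' : 0 < b ^ p := by positivity
    have hy : 0 < -y := by linarith
    have : 0 < b ^ p * (-y) ^ (p - 1) := by positivity
    rw [flux_neg hp h, E_neg hp h, max_eq_right (by linarith), neg_neg, max_eq_left this.le,
      Real.zero_rpow hq0, scal1 hp hb' hy]
    ring
  · subst h
    rw [flux_zero hp, E_zero hp]; simp [Real.zero_rpow hq0]
  · have ha' : 0 < a ^ p := by positivity
    have : 0 < a ^ p * y ^ (p - 1) := by positivity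
    rw [flux_pos hp h, E_pos hp h, max_eq_left this.le, max_eq_right (by linarith),
      Real.zero_rpow hq0, scal1 hp ha' h]
    ring

lemma Psi_hasDerivAt {p a b : ℝ} (hp : 1 < p) (ha : 0 < a) (hb : 0 < b) (y : ℝ) :
    HasDerivAt (Psi p a b) (p / (p - 1) * y) (asymFlux p a b y) := by
  have hq := q_gt hp
  have hq0 : p / (p - 1) - 1 ≠ 0 := by linarith
  have := ((posPow_hasDerivAt hq (asymFlux p a b y)).const_mul ((a ^ p) ^ (-(1 / (p - 1))))).add
    ((negPow_hasDerivAt hq (asymFlux p a b y)).const_mul ((b ^ p) ^ (-(1 / (p - 1)))))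
  refine this.congr_deriv ?_
  rcases lt_trichotomy y 0 with h | h | h
  · have hb' : 0 < b ^ p := by positivity
    have hy : 0 < -y := by linarith
    have h0 : 0 < b ^ p * (-y) ^ (p - 1) := by positivity
    have := scal2 hp hb' hy
    rw [flux_neg hp h, max_eq_right (by linarith), neg_neg, max_eq_left h0.le,
      Real.zero_rpow hq0]
    linear_combination (-(p / (p - 1))) * this
  · subst h
    rw [flux_zero hp]; simp [Real.zero_rpow hq0]
  · have ha' : 0 < a ^ p := by positivity
    have h0 : 0 < a ^ p * y ^ (p - 1) := by positivity
    have := scal2 hp ha' h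
    rw [flux_pos hp h, max_eq_left h0.le, max_eq_right (by linarith),
      Real.zero_rpow hq0]
    linear_combination (p / (p - 1)) * this

lemma max_point {L : ℝ} (hL : 0 < L) {u u' : ℝ → ℝ} (cu : Continuous u)
    (du : ∀ t ∈ Set.Ioo 0 L, HasDerivAt u (u' t) t)
    (z0 : ∀ t ≤ 0, u t = 0) (zL : ∀ t, L ≤ t → u t = 0) :
    ∃ M, 0 ≤ M ∧ (∀ t, u t ≤ M) ∧ (M = 0 ∨ ∃ t ∈ Set.Ioo 0 L, u t = M ∧ u' t = 0) := by
  obtain ⟨t1, ht1, hmax⟩ := isCompact_Icc.exists_isMaxOn (s := Set.Icc 0 L)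
    ⟨0, le_refl _, hL.le⟩ cu.continuousOn
  have hM0 : 0 ≤ u t1 := by
    rw [← z0 0 le_rfl]; exact hmax ⟨le_refl _, hL.le⟩
  have hall : ∀ t, u t ≤ u t1 := by
    intro t
    rcases le_or_gt t 0 with h | h
    · rw [z0 t h]; exact hM0
    rcases le_or_gt L t with h' | h'
    · rw [zL t h']; exact hM0
    exact hmax ⟨h.le, h'.le⟩
  refine ⟨u t1, hM0, hall, ?_⟩
  rcases eq_or_lt_of_le hM0 with h | h
  · exact Or.inl h.symm
  right
  have h1 : t1 ≠ 0 := by rintro rfl; rw [z0 0 le_rfl] at h; exact lt_irrefl _ h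
  have h2 : t1 ≠ L := by rintro rfl; rw [zL t1 le_rfl] at h; exact lt_irrefl _ h
  have hin : t1 ∈ Set.Ioo 0 L := ⟨lt_of_le_of_ne ht1.1 h1.symm, lt_of_le_of_ne ht1.2 h2⟩
  refine ⟨t1, hin, rfl, ?_⟩
  exact IsLocalMax.hasDerivAt_eq_zero (Filter.Eventually.of_forall hall) (du t1 hin)

lemma const_of {L : ℝ} {f : ℝ → ℝ} (cf : Continuous f)
    (df : ∀ t ∈ Set.Ioo 0 L, HasDerivAt f 0 t) : ∀ t ∈ Set.Icc 0 L, f t = f 0 := by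
  intro t ht
  have := MeasureTheory.integral_eq_of_hasDerivAt_off_countable_of_le f (fun _ => 0) ht.1
    Set.countable_empty cf.continuousOn
    (fun x hx => df x ⟨hx.1.1, hx.1.2.trans_le ht.2⟩) (by simp)
  simp at this
  linarith

lemma asymE_eq_zero {p a b y : ℝ} (hp : 1 < p) (ha : 0 < a) (hb : 0 < b)
    (h : asymE p a b y = 0) : y = 0 := by
  rcases lt_trichotomy y 0 with h' | h' | h'
  · rw [E_neg hp h'] at h
    have hy : 0 < -y := by linarith
    have : 0 < b ^ p * (-y) ^ p := by positivity
    linarith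
  · exact h'
  · rw [E_pos hp h'] at h
    have : 0 < a ^ p * y ^ p := by positivity
    linarith

lemma energy {p a b L μ ν : ℝ} (hp : 1 < p) (ha : 0 < a) (hb : 0 < b) (hL : 0 < L)
    {u u' : ℝ → ℝ} (S : Strong p a b L μ ν u u') :
    ∃ E, 0 < E ∧ (∀ t ∈ Set.Icc 0 L, (p - 1) * asymE p a b (u' t) + GG p μ ν (u t) = E) ∧
    ∃ M m, 0 ≤ M ∧ 0 ≤ m ∧ (∀ t, -m ≤ u t ∧ u t ≤ M) ∧ (M = 0 ∨ E = μ * M ^ p) ∧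
      (m = 0 ∨ E = ν * m ^ p) := by
  have hp1 : p - 1 ≠ 0 := by linarith
  set e : ℝ → ℝ := fun t => (p - 1) * Psi p a b (asymFlux p a b (u' t)) + GG p μ ν (u t) with he
  have cPsi : Continuous (Psi p a b) := by
    unfold Psi
    have := q_gt hp
    exact (continuous_const.mul (posPow_continuous (by linarith))).add
      (continuous_const.mul (negPow_continuous (by linarith)))
  have ce : Continuous e :=
    (continuous_const.mul (cPsi.comp ((asymFlux_continuous hp a b).comp S.cu'))).add
      ((GG_continuous hp μ ν).comp S.cu)
  have hconst : ∀ t ∈ Set.Icc 0 L, e t = e 0 := by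
    refine const_of ce fun t ht => ?_
    have h1 := (HasDerivAt.comp t (Psi_hasDerivAt hp ha hb (u' t)) (S.dw t ht)).const_mul (p - 1)
    have h2 := HasDerivAt.comp t (GG_hasDerivAt hp μ ν (u t)) (S.du t ht)
    refine (h1.add h2).congr_deriv ?_
    field_simp
    ring
  have hE : ∀ t ∈ Set.Icc 0 L, (p - 1) * asymE p a b (u' t) + GG p μ ν (u t) = e 0 := by
    intro t ht
    rw [← hconst t ht, he]
    simp only [Psi_flux hp ha hb]
  obtain ⟨M, hM0, hM, hM'⟩ := max_point hL S.cu S.du S.z0 S.zL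
  obtain ⟨m, hm0, hm, hm'⟩ := max_point hL (u := fun t => -u t) (u' := fun t => -u' t) S.cu.neg
    (fun t ht => (S.du t ht).neg) (fun t ht => by rw [S.z0 t ht, neg_zero])
    (fun t ht => by rw [S.zL t ht, neg_zero])
  have eM : M = 0 ∨ e 0 = μ * M ^ p := by
    refine hM'.imp id ?_
    rintro ⟨t, ht, h1, h2⟩
    have := hE t ⟨ht.1.le, ht.2.le⟩
    rw [h2, h1, E_zero hp, mul_zero, zero_add, GG_pos hp _ _ hM0] at this
    exact this.symm
  have em : m = 0 ∨ e 0 = ν * m ^ p := by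
    refine hm'.imp id ?_
    rintro ⟨t, ht, h1, h2⟩
    have := hE t ⟨ht.1.le, ht.2.le⟩
    rw [neg_eq_zero.1 h2, (by linarith : u t = -m), E_zero hp, mul_zero, zero_add, GG_neg,
      GG_pos hp _ _ hm0] at this
    exact this.symm
  refine ⟨e 0, ?_, hE, M, m, hM0, hm0, fun t => ⟨by linarith [hm t], hM t⟩, eM, em⟩
  have hnn : 0 ≤ e 0 := by
    rw [← hE 0 ⟨le_refl _, hL.le⟩, S.z0 0 le_rfl, GG_zero hp, add_zero]
    exact mul_nonneg (by linarith) (asymE_nonneg ha hb _)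
  rcases eq_or_lt_of_le hnn with h0 | h0
  swap
  · exact h0
  exfalso
  rw [← h0] at eM em hE
  have k1 : ∀ t, μ * (max (u t) 0) ^ p = 0 := by
    intro t
    rcases eq_or_lt_of_le hM0 with h | h
    · rw [max_eq_right (by linarith [hM t]), Real.zero_rpow (by linarith), mul_zero]
    · have : μ = 0 := by
        rcases eM with h' | h'
        · linarith
        · have : 0 < M ^ p := by positivity
          rcases mul_eq_zero.1 h'.symm with h'' | h''
          · exact h''
          · linarith
      rw [this, zero_mul]
  have k2 : ∀ t, ν * (max (-u t) 0) ^ p = 0 := by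
    intro t
    rcases eq_or_lt_of_le hm0 with h | h
    · rw [max_eq_right (by linarith [hm t]), Real.zero_rpow (by linarith), mul_zero]
    · have : ν = 0 := by
        rcases em with h' | h'
        · linarith
        · have : 0 < m ^ p := by positivity
          rcases mul_eq_zero.1 h'.symm with h'' | h''
          · exact h''
          · linarith
      rw [this, zero_mul]
  have hu' : ∀ t ∈ Set.Icc 0 L, u' t = 0 := by
    intro t ht
    have := hE t ht
    unfold GG at this
    rw [k1, k2, add_zero, add_zero] at this
    exact asymE_eq_zero hp ha hb ((mul_eq_zero.1 this).resolve_left hp1)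
  obtain ⟨t, ht, hne⟩ := S.nz
  apply hne
  rw [const_of S.cu (fun x hx => by
    have := S.du x hx
    rwa [hu' x ⟨hx.1.le, hx.2.le⟩] at this) t ht, S.z0 0 le_rfl]

lemma zeros_countable {p a b L μ ν : ℝ} (hp : 1 < p) (ha : 0 < a) (hb : 0 < b) (hL : 0 < L)
    {u u' : ℝ → ℝ} (S : Strong p a b L μ ν u u') :
    {t | t ∈ Set.Ioo 0 L ∧ u' t = 0}.Countable := by
  obtain ⟨E, hE0, hE, -⟩ := energy hp ha hb hL S
  set Z := {t | t ∈ Set.Ioo 0 L ∧ u' t = 0} with hZ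
  refine (countable_setOfPred_isolated_right_within (s := Z)).mono ?_
  intro t ht
  refine ⟨ht, ?_⟩
  have h1 := hE t ⟨ht.1.1.le, ht.1.2.le⟩
  rw [ht.2, E_zero hp, mul_zero, zero_add, GG_eq hp] at h1
  have h2 : -(gg p μ ν (u t)) ≠ 0 := by
    intro h
    rw [neg_eq_zero.1 h, mul_zero] at h1
    linarith
  have h3 : ∀ᶠ z in nhdsWithin t {t}ᶜ, asymFlux p a b (u' z) ≠ 0 :=
    (S.dw t ht.1).eventually_ne h2
  have h4 : ∀ᶠ z in nhdsWithin t (Z ∩ Set.Ioi t), asymFlux p a b (u' z) ≠ 0 :=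
    h3.filter_mono (nhdsWithin_mono t (fun x hx => (ne_of_gt hx.2 : x ≠ t)))
  have h5 : ∀ᶠ z in nhdsWithin t (Z ∩ Set.Ioi t), False := by
    filter_upwards [h4, self_mem_nhdsWithin] with z hz hz'
    apply hz
    rw [hz'.1.2, flux_zero hp]
  exact Filter.eventually_false_iff_eq_bot.1 h5

/-- The integrand of the time function. -/
noncomputable def kk (p E μ ν x : ℝ) : ℝ := ((E - GG p μ ν x) / (p - 1)) ^ (-(1 / p))

lemma kk_int {p E μ ν M : ℝ} (hp : 1 < p) (hE : 0 < E) (hM : 0 ≤ M)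
    (h : M = 0 ∨ E = μ * M ^ p) :
    IntervalIntegrable (kk p E μ ν) MeasureTheory.volume 0 M := by
  rcases eq_or_lt_of_le hM with h0 | h0
  · rw [← h0]
  have hEM : E = μ * M ^ p := h.resolve_left h0.ne'
  have hp1 : 0 < p - 1 := by linarith
  have hpi : 1 / p < 1 := by rw [div_lt_one (by linarith)]; exact hp
  have hpi0 : 0 < 1 / p := by positivity
  have i1 : IntervalIntegrable (fun x : ℝ => (M - x) ^ (-(1 / p))) MeasureTheory.volume 0 M := by
    have := (intervalIntegral.intervalIntegrable_rpow' (a := M) (b := 0) (r := -(1 / p))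
      (by linarith)).comp_sub_left M
    simpa using this
  have i2 := i1.const_mul ((E / M / (p - 1)) ^ (-(1 / p)))
  refine i2.mono_fun ?_ ?_
  · apply Measurable.aestronglyMeasurable
    unfold kk
    have := (GG_continuous hp μ ν).measurable
    fun_prop
  · rw [Set.uIoc_of_le hM]
    refine (MeasureTheory.ae_restrict_iff' measurableSet_Ioc).2 (Filter.Eventually.of_forall ?_)
    intro x hx
    have hEG : E - GG p μ ν x = E * (1 - (x / M) ^ p) := by
      rw [GG_pos hp _ _ hx.1.le, Real.div_rpow hx.1.le hM, hEM]
      have : M ^ p ≠ 0 := by positivity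
      field_simp
    unfold kk
    beta_reduce
    rw [hEG]
    rcases eq_or_lt_of_le hx.2 with h1 | h1
    · subst h1
      rw [div_self h0.ne', Real.one_rpow]
      rw [sub_self, sub_self, mul_zero, zero_div,
        Real.zero_rpow (by linarith : -(1 / p) ≠ 0), mul_zero]
    · have hxM : x / M < 1 := by rw [div_lt_one h0]; exact h1
      have hx0 : 0 < x / M := div_pos hx.1 h0
      have h2 : (x / M) ^ p ≤ x / M := by
        calc (x / M) ^ p ≤ (x / M) ^ (1:ℝ) :=
              Real.rpow_le_rpow_of_exponent_ge hx0 hxM.le hp.le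
          _ = x / M := Real.rpow_one _
      have hMx : 0 < M - x := by linarith
      have hC : 0 < E / M / (p - 1) := by positivity
      rw [Real.norm_of_nonneg (by apply Real.rpow_nonneg; apply div_nonneg _ hp1.le; nlinarith),
        Real.norm_of_nonneg (by positivity), ← Real.mul_rpow hC.le hMx.le]
      apply Real.rpow_le_rpow_of_nonpos (by positivity) _ (by linarith)
      have : E / M / (p - 1) * (M - x) = E * (1 - x / M) / (p - 1) := by field_simp
      rw [this]
      gcongr

lemma time_fun {p a b L μ ν : ℝ} (hp : 1 < p) (ha : 0 < a) (hb : 0 < b) (hL : 0 < L)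
    {u u' : ℝ → ℝ} (S : Strong p a b L μ ν u u') :
    ∃ h : ℝ → ℝ, Continuous h ∧ (∀ t ≤ 0, h t = 0) ∧ (∀ t, L ≤ t → h t = 0) ∧
      ∀ t ∈ Set.Ioo 0 L, (0 < u' t → HasDerivAt h (1 / a) t) ∧
        (u' t < 0 → HasDerivAt h (-(1 / b)) t) := by
  obtain ⟨E, hE0, hE, M, m, hM0, hm0, hbd, hM, hm⟩ := energy hp ha hb hL S
  have hp1 : 0 < p - 1 := by linarith
  have i1 : IntervalIntegrable (kk p E μ ν) MeasureTheory.volume 0 M := kk_int hp hE0 hM0 hM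
  have i2 : IntervalIntegrable (kk p E μ ν) MeasureTheory.volume (-m) 0 := by
    have i3 : IntervalIntegrable (kk p E ν μ) MeasureTheory.volume 0 m := kk_int hp hE0 hm0 hm
    have i4 := i3.comp_sub_left 0
    have e : (fun x => kk p E ν μ (0 - x)) = kk p E μ ν := by
      ext x; unfold kk; rw [zero_sub, GG_neg]
    rw [e] at i4
    simpa using i4.symm
  have i : IntervalIntegrable (kk p E μ ν) MeasureTheory.volume (-m) M := i2.trans i1
  have hmem : ∀ t, u t ∈ Set.uIcc (-m) M := fun t => by
    rw [Set.uIcc_of_le (by linarith)]; exact hbd t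
  have h0mem : (0:ℝ) ∈ Set.uIcc (-m) M := by
    rw [Set.uIcc_of_le (by linarith)]; exact ⟨by linarith, hM0⟩
  have meas : Measurable (kk p E μ ν) := by
    unfold kk
    have := (GG_continuous hp μ ν).measurable
    fun_prop
  have base : ∀ t ∈ Set.Ioo 0 L, ∀ c, 0 < c → (p - 1) * c ^ p = E - GG p μ ν (u t) →
      HasDerivAt (fun t => ∫ x in (0:ℝ)..(u t), kk p E μ ν x) (1 / c * u' t) t := by
    intro t ht c hc hce
    have hB : (E - GG p μ ν (u t)) / (p - 1) = c ^ p := by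
      rw [← hce]; field_simp
    have hkv : kk p E μ ν (u t) = 1 / c := by
      unfold kk
      rw [hB, ← Real.rpow_mul hc.le, (by field_simp : p * -(1 / p) = -1), Real.rpow_neg_one,
        one_div]
    have hck : ContinuousAt (kk p E μ ν) (u t) := by
      unfold kk
      refine ContinuousAt.rpow_const ?_ (Or.inl ?_)
      · exact ((continuous_const.sub (GG_continuous hp μ ν)).div_const _).continuousAt
      · rw [hB]; positivity
    have hd : HasDerivAt (fun y => ∫ x in (0:ℝ)..y, kk p E μ ν x) (kk p E μ ν (u t)) (u t) :=
      intervalIntegral.integral_hasDerivAt_right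
        (i.mono_set (Set.uIcc_subset_uIcc h0mem (hmem t)))
        (meas.stronglyMeasurable.stronglyMeasurableAtFilter) hck
    rw [hkv] at hd
    exact HasDerivAt.comp t hd (S.du t ht)
  refine ⟨fun t => ∫ x in (0:ℝ)..(u t), kk p E μ ν x, ?_, ?_, ?_, ?_⟩
  · exact (intervalIntegral.continuousOn_primitive_interval' i h0mem).comp_continuous S.cu hmem
  · intro t ht; simp [S.z0 t ht]
  · intro t ht; simp [S.zL t ht]
  · intro t ht
    have he := hE t ⟨ht.1.le, ht.2.le⟩
    constructor
    · intro hy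
      refine (base t ht (a * u' t) (by positivity) ?_).congr_deriv (by field_simp)
      rw [Real.mul_rpow ha.le hy.le, ← E_pos (b := b) hp hy]; linarith
    · intro hy
      have hy' : 0 < -u' t := by linarith
      have := hy.ne
      refine (base t ht (b * (-u' t)) (by positivity) ?_).congr_deriv (by field_simp)
      rw [Real.mul_rpow hb.le hy'.le, ← E_neg (a := a) hp hy]; linarith

lemma flux_scale {p a b a' b' c : ℝ} (hp : 1 < p) (ha : 0 < a) (hb : 0 < b)
    (hc : 0 < c) {rp rm : ℝ} (hrp : 0 < rp) (hrm : 0 < rm)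
    (e1 : c * rp * a = a') (e2 : c * rm * b = b') (y : ℝ) :
    (0 < y → asymFlux p a' b' (max y 0 / rp - max (-y) 0 / rm) = c ^ p * rp * asymFlux p a b y) ∧
    (y < 0 → asymFlux p a' b' (max y 0 / rp - max (-y) 0 / rm) = c ^ p * rm * asymFlux p a b y) := by
  have key : ∀ r x α z : ℝ, 0 < r → 0 < x → 0 < α → c * r * α = z →
      z ^ p * (x / r) ^ (p - 1) = c ^ p * r * (α ^ p * x ^ (p - 1)) := by
    intro r x α z hr hx hα hz
    rw [← hz, Real.mul_rpow (by positivity) hα.le, Real.mul_rpow hc.le hr.le,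
      Real.div_rpow hx.le hr.le]
    have : r ^ p = r ^ (p - 1) * r := by
      nth_rewrite 3 [← Real.rpow_one r]
      rw [← Real.rpow_add hr]; congr 1; ring
    rw [this]
    have : r ^ (p - 1) ≠ 0 := by positivity
    field_simp
  constructor
  · intro hy
    rw [max_eq_left hy.le, max_eq_right (by linarith), zero_div, sub_zero,
      flux_pos hp (div_pos hy hrp), flux_pos hp hy]
    exact key rp y a a' hrp hy ha e1
  · intro hy
    have hy' : 0 < -y := by linarith
    have h2 : 0 < -y / rm := div_pos hy' hrm
    rw [max_eq_right hy.le, max_eq_left hy'.le, zero_div, zero_sub,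
      flux_neg hp (by linarith), flux_neg hp hy, neg_neg, key rm (-y) b b' hrm hy' hb e2]
    ring

lemma transfer {p a b a' b' L μ ν : ℝ} (hp : 1 < p) (ha : 0 < a) (hb : 0 < b) (ha' : 0 < a')
    (hb' : 0 < b') (hL : 0 < L) (H : FucikMem p a b L μ ν) :
    FucikMem p a' b' L (((a' + b') / (a + b)) ^ p * μ) (((a' + b') / (a + b)) ^ p * ν) := by
  obtain ⟨u, u', S⟩ := strong_of_mem hp hL H
  obtain ⟨h, ch, hz0, hzL, hd⟩ := time_fun hp ha hb hL S
  have hZ := zeros_countable hp ha hb hL S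
  set Z := {t | t ∈ Set.Ioo 0 L ∧ u' t = 0} with hZdef
  set c := (a' + b') / (a + b) with hcdef
  have hc : 0 < c := by positivity
  set rp := a' / (a * c) with hrpdef
  set rm := b' / (b * c) with hrmdef
  have hrp : 0 < rp := by positivity
  have hrm : 0 < rm := by positivity
  have e1 : c * rp * a = a' := by rw [hrpdef]; field_simp
  have e2 : c * rm * b = b' := by rw [hrmdef]; field_simp
  have e3 : c * (a + b) = a' + b' := by rw [hcdef]; field_simp
  set β := a * (rp - 1) with hβ
  have b1 : 1 + β * (1 / a) = rp := by rw [hβ]; field_simp; ring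
  have b2 : 1 + β * (-(1 / b)) = rm := by
    have : c * (rp * a + rm * b) = c * (a + b) := by linarith
    have := mul_left_cancel₀ hc.ne' this
    rw [hβ]; field_simp; linarith
  set s : ℝ → ℝ := fun t => t + β * h t with hs
  have cs : Continuous s := continuous_id.add (continuous_const.mul ch)
  have s0 : ∀ t ≤ 0, s t = t := fun t ht => by simp [hs, hz0 t ht]
  have sL : ∀ t, L ≤ t → s t = t := fun t ht => by simp [hs, hzL t ht]
  have ds1 : ∀ t ∈ Set.Ioo 0 L, 0 < u' t → HasDerivAt s rp t := fun t ht hy =>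
    ((hasDerivAt_id t).add (((hd t ht).1 hy).const_mul β)).congr_deriv b1
  have ds2 : ∀ t ∈ Set.Ioo 0 L, u' t < 0 → HasDerivAt s rm t := fun t ht hy =>
    ((hasDerivAt_id t).add (((hd t ht).2 hy).const_mul β)).congr_deriv b2
  -- strict monotonicity
  have smono : StrictMono s := by
    set ρ : ℝ → ℝ := fun t => if t ∈ Set.Ioo 0 L then (if 0 < u' t then rp else rm) else 1 with hρ
    set δ := min 1 (min rp rm) with hδ
    have hδ0 : 0 < δ := lt_min one_pos (lt_min hrp hrm)
    have hδρ : ∀ t, δ ≤ ρ t := by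
      intro t
      simp only [hρ]
      split_ifs
      · exact (min_le_right _ _).trans (min_le_left _ _)
      · exact (min_le_right _ _).trans (min_le_right _ _)
      · exact min_le_left _ _
    have hρB : ∀ t, ρ t ≤ 1 + rp + rm := by
      intro t
      simp only [hρ]
      split_ifs <;> linarith
    have mρ : Measurable ρ := by
      refine Measurable.ite measurableSet_Ioo (Measurable.ite ?_ measurable_const measurable_const)
        measurable_const
      exact measurableSet_lt measurable_const S.cu'.measurable
    have iρ : ∀ x y, IntervalIntegrable ρ MeasureTheory.volume x y := by
      intro x y
      refine (intervalIntegrable_const (c := 1 + rp + rm)).mono_fun mρ.aestronglyMeasurable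
        (Filter.Eventually.of_forall fun t => ?_)
      have : 0 < ρ t := hδ0.trans_le (hδρ t)
      beta_reduce
      rw [Real.norm_of_nonneg this.le, Real.norm_of_nonneg (by positivity)]
      exact hρB t
    have hC : (Z ∪ {0, L}).Countable := hZ.union (Set.toFinite _).countable
    intro x y hxy
    have hint := MeasureTheory.integral_eq_of_hasDerivAt_off_countable_of_le s ρ hxy.le hC
      cs.continuousOn (fun t ht => by
        have ht2 := ht.2
        simp only [Set.mem_union, Set.mem_insert_iff, Set.mem_singleton_iff, not_or] at ht2
        rcases lt_or_gt_of_ne ht2.2.1 with h0 | h0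
        · have : t ∉ Set.Ioo 0 L := fun h' => by linarith [h'.1]
          simp only [hρ, if_neg this]
          refine (hasDerivAt_id t).congr_of_eventuallyEq ?_
          filter_upwards [gt_mem_nhds h0] with z hz
          exact s0 z hz.le
        rcases lt_or_gt_of_ne ht2.2.2 with h1 | h1
        · have hin : t ∈ Set.Ioo 0 L := ⟨h0, h1⟩
          have hne : u' t ≠ 0 := fun h' => ht2.1 ⟨hin, h'⟩
          simp only [hρ, if_pos hin]
          rcases lt_or_gt_of_ne hne with h2 | h2
          · rw [if_neg (by linarith)]; exact ds2 t hin h2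
          · rw [if_pos h2]; exact ds1 t hin h2
        · have : t ∉ Set.Ioo 0 L := fun h' => by linarith [h'.2]
          simp only [hρ, if_neg this]
          refine (hasDerivAt_id t).congr_of_eventuallyEq ?_
          filter_upwards [lt_mem_nhds h1] with z hz
          exact sL z hz.le) (iρ x y)
    have hle : (∫ _ in x..y, δ) ≤ ∫ t in x..y, ρ t :=
      intervalIntegral.integral_mono hxy.le intervalIntegrable_const (iρ x y) hδρ
    rw [intervalIntegral.integral_const, smul_eq_mul] at hle
    have : 0 < (y - x) * δ := mul_pos (by linarith) hδ0
    linarith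
  have ssurj : Function.Surjective s := by
    apply cs.surjective
    · refine Filter.tendsto_id.congr' ?_
      filter_upwards [Filter.eventually_ge_atTop L] with t ht
      exact (sL t ht).symm
    · refine Filter.tendsto_id.congr' ?_
      filter_upwards [Filter.eventually_le_atBot 0] with t ht
      exact (s0 t ht).symm
  set e := StrictMono.orderIsoOfSurjective s smono ssurj with he
  set T : ℝ → ℝ := fun x => e.symm x with hT
  have cT : Continuous T := e.symm.continuous
  have sT : ∀ x, s (T x) = x := fun x => e.apply_symm_apply x
  have Ts : ∀ x, T (s x) = x := fun x => e.symm_apply_apply x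
  have T0 : T 0 = 0 := by
    have := Ts 0
    rwa [s0 0 le_rfl] at this
  have TL : T L = L := by
    have := Ts L
    rwa [sL L le_rfl] at this
  have Tmono : StrictMono T := e.symm.strictMono
  have Tin : ∀ x ∈ Set.Ioo 0 L, T x ∈ Set.Ioo 0 L := fun x hx =>
    ⟨by rw [← T0]; exact Tmono hx.1, by rw [← TL]; exact Tmono hx.2⟩
  have Tne : ∀ x ∈ Set.Ioo 0 L \ s '' Z, u' (T x) ≠ 0 := fun x hx h' =>
    hx.2 ⟨T x, ⟨Tin x hx.1, h'⟩, sT x⟩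
  have dT1 : ∀ x ∈ Set.Ioo 0 L, 0 < u' (T x) → HasDerivAt T rp⁻¹ x := fun x hx hy =>
    HasDerivAt.of_local_left_inverse cT.continuousAt (ds1 _ (Tin x hx) hy) hrp.ne'
      (Filter.Eventually.of_forall sT)
  have dT2 : ∀ x ∈ Set.Ioo 0 L, u' (T x) < 0 → HasDerivAt T rm⁻¹ x := fun x hx hy =>
    HasDerivAt.of_local_left_inverse cT.continuousAt (ds2 _ (Tin x hx) hy) hrm.ne'
      (Filter.Eventually.of_forall sT)
  have cuT : Continuous (fun x => u' (T x)) := S.cu'.comp cT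
  have hgg : ∀ z, gg p (c ^ p * μ) (c ^ p * ν) z = c ^ p * gg p μ ν z := fun z => by
    unfold gg; ring
  refine mem_of_strong (u := fun x => u (T x))
    (u' := fun x => max (u' (T x)) 0 / rp - max (-u' (T x)) 0 / rm) (Z := s '' Z)
    hp hL (hZ.image s) (S.cu.comp cT) ?_ ?_ ?_ ?_ ?_ ?_
  · exact ((cuT.max continuous_const).div_const _).sub ((cuT.neg.max continuous_const).div_const _)
  · intro x hx
    have hdu := S.du _ (Tin x hx.1)
    rcases lt_or_gt_of_ne (Tne x hx) with hy | hy
    · refine (HasDerivAt.comp x hdu (dT2 x hx.1 hy)).congr_deriv ?_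
      rw [max_eq_right hy.le, max_eq_left (by linarith)]
      field_simp; ring
    · refine (HasDerivAt.comp x hdu (dT1 x hx.1 hy)).congr_deriv ?_
      rw [max_eq_left hy.le, max_eq_right (by linarith)]
      field_simp; ring
  · intro x hx
    have hdw := S.dw _ (Tin x hx.1)
    rw [hgg]
    rcases lt_or_gt_of_ne (Tne x hx) with hy | hy
    · have h1 := (HasDerivAt.comp x hdw (dT2 x hx.1 hy)).const_mul (c ^ p * rm)
      refine (h1.congr_deriv ?_).congr_of_eventuallyEq ?_
      · field_simp
      · filter_upwards [cuT.continuousAt.eventually (gt_mem_nhds hy)] with z hz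
        exact (flux_scale hp ha hb hc hrp hrm e1 e2 _).2 hz
    · have h1 := (HasDerivAt.comp x hdw (dT1 x hx.1 hy)).const_mul (c ^ p * rp)
      refine (h1.congr_deriv ?_).congr_of_eventuallyEq ?_
      · field_simp
      · filter_upwards [cuT.continuousAt.eventually (lt_mem_nhds hy)] with z hz
        exact (flux_scale hp ha hb hc hrp hrm e1 e2 _).1 hz
  · simp only [T0]; exact S.z0 0 le_rfl
  · simp only [TL]; exact S.zL L le_rfl
  · obtain ⟨t, ht, hne⟩ := S.nz
    refine ⟨s t, ⟨?_, ?_⟩, ?_⟩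
    · rw [← s0 0 le_rfl]; exact smono.monotone ht.1
    · rw [← sL L le_rfl]; exact smono.monotone ht.2
    · simpa only [Ts] using hne

theorem stmt16 (p a b L : ℝ) (hp : 1 < p) (ha : 0 < a) (hb : 0 < b) (hL : 0 < L) :
    ∀ μ ν : ℝ, FucikMem p a b L μ ν ↔
      FucikMem p 1 1 L ((2 / (a + b)) ^ p * μ) ((2 / (a + b)) ^ p * ν) := by
  intro μ ν
  constructor
  · intro H
    have := transfer hp ha hb one_pos one_pos hL H
    rwa [one_add_one_eq_two] at this
  · intro H
    have := transfer hp one_pos one_pos ha hb hL H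
    rw [one_add_one_eq_two, ← mul_assoc, ← mul_assoc,
      ← Real.mul_rpow (by positivity) (by positivity),
      (by field_simp : (a + b) / 2 * (2 / (a + b)) = 1), Real.one_rpow, one_mul, one_mul] at this
    exact this
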